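/- Let a be a channel, let G = μX.(⅓τ.(a.0 + τ.X) ⊕ ⅔τ.X) and G_a = a.0 + τ.G, where a.T' + τ.T abbreviates (c)(c̄.0 | (a.T' + c.T)) for a fresh channel c. Then the equivalence closure of the single pair {(G, G_a)} is a codivergent branching bisimulation on P_RCCS; in particular G =_RCCS a.0 + τ.G. -/

import Mathlib

/-!
Formalization of RCCS (Randomized CCS) following the paper
"A Uniform Framework for Probabilistic Process Models".
Channels form a type `Chan`; terms use de Bruijn indices for process variables.
-/

noncomputable section
open scoped Classical

/-- RCCS terms over a set of channels, with de Bruijn process variables.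
`sum n α T` is the nondeterministic choice `Σ_{i∈[n]} α_i.T_i` (guards are
names `Sum.inl a` or conames `Sum.inr a`); `rand n p T` is the random choice
`⊕_{i∈[n]} p_i τ.T_i`; `par` is composition, `loc a T` is localization `(a)T`,
and `fix T` is the fixpoint `μX.T`. -/
inductive Tm (Chan : Type) : Type
  | var : ℕ → Tm Chan
  | sum : (n : ℕ) → (Fin n → Chan ⊕ Chan) → (Fin n → Tm Chan) → Tm Chan
  | rand : (n : ℕ) → (Fin n → ℝ) → (Fin n → Tm Chan) → Tm Chan
  | par : Tm Chan → Tm Chan → Tm Chan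
  | loc : Chan → Tm Chan → Tm Chan
  | fix : Tm Chan → Tm Chan

variable {Chan : Type}

/-- Labels: names, conames, and `tau p` for `p ∈ (0,1]`; `tau 1` is the plain
silent action `τ`, identified with `1τ`. -/
inductive Lab (Chan : Type) : Type
  | name : Chan → Lab Chan
  | coname : Chan → Lab Chan
  | tau : ℝ → Lab Chan

/-- The label of an external prefix. -/
def guardLab : Chan ⊕ Chan → Lab Chan
  | .inl a => .name a
  | .inr a => .coname a

/-- A label is an action in `Act` if it is a name, a coname, or `τ = 1τ`. -/
def Lab.IsAct : Lab Chan → Prop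
  | .name _ => True
  | .coname _ => True
  | .tau p => p = 1

/-- Shift de Bruijn indices `≥ c` up by one. -/
def Tm.lift : ℕ → Tm Chan → Tm Chan
  | c, .var n => .var (if n < c then n else n + 1)
  | c, .sum n α T => .sum n α fun i => Tm.lift c (T i)
  | c, .rand n p T => .rand n p fun i => Tm.lift c (T i)
  | c, .par S T => .par (Tm.lift c S) (Tm.lift c T)
  | c, .loc a T => .loc a (Tm.lift c T)
  | c, .fix T => .fix (Tm.lift (c + 1) T)

/-- Capture-avoiding substitution of the term `S` for variable `c`
(other variables above `c` are shifted down). -/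
def Tm.inst : ℕ → Tm Chan → Tm Chan → Tm Chan
  | c, S, .var n => if n < c then .var n else if n = c then S else .var (n - 1)
  | c, S, .sum n α T => .sum n α fun i => Tm.inst c S (T i)
  | c, S, .rand n p T => .rand n p fun i => Tm.inst c S (T i)
  | c, S, .par S' T => .par (Tm.inst c S S') (Tm.inst c S T)
  | c, S, .loc a T => .loc a (Tm.inst c S T)
  | c, S, .fix T => .fix (Tm.inst (c + 1) (Tm.lift 0 S) T)

/-- All free variables are `< k`. -/
def Tm.ClosedAt : ℕ → Tm Chan → Prop
  | k, .var n => n < k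
  | k, .sum _ _ T => ∀ i, Tm.ClosedAt k (T i)
  | k, .rand _ _ T => ∀ i, Tm.ClosedAt k (T i)
  | k, .par S T => Tm.ClosedAt k S ∧ Tm.ClosedAt k T
  | k, .loc _ T => Tm.ClosedAt k T
  | k, .fix T => Tm.ClosedAt (k + 1) T

/-- Variable `v` is guarded: every free occurrence of `v` is under a prefix. -/
def Tm.Guarded : ℕ → Tm Chan → Prop
  | v, .var n => n ≠ v
  | _, .sum _ _ _ => True
  | _, .rand _ _ _ => True
  | v, .par S T => Tm.Guarded v S ∧ Tm.Guarded v T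
  | v, .loc _ T => Tm.Guarded v T
  | v, .fix T => Tm.Guarded (v + 1) T

/-- Well-formedness: in every random choice `⊕_{i∈I} p_i τ.T_i` we have `|I| ≥ 2`,
`p_i ∈ (0,1)` and `Σ_i p_i = 1`; in every fixpoint `μX.T` the variable `X` is
guarded in `T`. -/
def Tm.WF : Tm Chan → Prop
  | .var _ => True
  | .sum _ _ T => ∀ i, Tm.WF (T i)
  | .rand n p T => 2 ≤ n ∧ (∀ i, 0 < p i ∧ p i < 1) ∧ (∑ i, p i) = 1 ∧ ∀ i, Tm.WF (T i)
  | .par S T => Tm.WF S ∧ Tm.WF T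
  | .loc _ T => Tm.WF T
  | .fix T => Tm.Guarded 0 T ∧ Tm.WF T

/-- A term with no random choice, i.e. a CCS term. -/
def Tm.NoRand : Tm Chan → Prop
  | .var _ => True
  | .sum _ _ T => ∀ i, Tm.NoRand (T i)
  | .rand _ _ _ => False
  | .par S T => Tm.NoRand S ∧ Tm.NoRand T
  | .loc _ T => Tm.NoRand T
  | .fix T => Tm.NoRand T

/-- The transition relation of RCCS. -/
inductive Step : Tm Chan → Lab Chan → Tm Chan → Prop
  | sum {n α T} (i : Fin n) : Step (.sum n α T) (guardLab (α i)) (T i)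
  | rand {n p T} (i : Fin n) : Step (.rand n p T) (.tau (p i)) (T i)
  | comL {S S' T T' a} : Step S (.name a) S' → Step T (.coname a) T' →
      Step (.par S T) (.tau 1) (.par S' T')
  | comR {S S' T T' a} : Step S (.coname a) S' → Step T (.name a) T' →
      Step (.par S T) (.tau 1) (.par S' T')
  | parL {S S' T l} : Step S l S' → Step (.par S T) l (.par S' T)
  | parR {S T T' l} : Step T l T' → Step (.par S T) l (.par S T')
  | loc {T T' l} (a : Chan) : Step T l T' → l ≠ .name a → l ≠ .coname a →
      Step (.loc a T) l (.loc a T')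
  | fix {T T' l} : Step (Tm.inst 0 (.fix T) T) l T' → Step (.fix T) l T'

/-- Collective silent transitions `B →^{∐_{i∈[n]} p_i τ} ∐_{i∈[n]} B_i`,
arising from a single random choice and closed under composition,
localization and recursion. -/
inductive CStep : Tm Chan → (n : ℕ) → (Fin n → ℝ) → (Fin n → Tm Chan) → Prop
  | rand {n p T} : CStep (.rand n p T) n p T
  | parL {S T n p S'} : CStep S n p S' → CStep (.par S T) n p fun i => .par (S' i) T
  | parR {S T n p T'} : CStep T n p T' → CStep (.par S T) n p fun i => .par S (T' i)
  | loc {T n p T'} (a : Chan) : CStep T n p T' → CStep (.loc a T) n p fun i => .loc a (T' i)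
  | fix {T n p T'} : CStep (Tm.inst 0 (.fix T) T) n p T' → CStep (.fix T) n p T'

/-- The set `P_RCCS` of RCCS processes: closed well-formed terms. -/
def Proc (Chan : Type) : Type := {T : Tm Chan // T.ClosedAt 0 ∧ T.WF}

/-- A (potential) silent tree: nodes are addressed by reversed lists of child
indices (the root is `[]`, the `i`-th child of `σ` is `i :: σ`); each node
carries a process label and the probability labelling its incoming edge
(the root carries `1`). -/
structure PTree (Chan : Type) where
  node : List ℕ → Option (Proc Chan × ℝ)

namespace PTree

variable (t : PTree Chan)

/-- The address `σ` is a node of the tree. -/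
def hasNode (σ : List ℕ) : Prop := (t.node σ).isSome

/-- The probability labelling the incoming edge of the node at `σ`. -/
def edgeProb (σ : List ℕ) : ℝ := ((t.node σ).map Prod.snd).getD 0

/-- The probability of the path from the root to `σ`: the product of the edge
labels along it (`1` for the empty path). -/
def pathProb (t : PTree Chan) : List ℕ → ℝ
  | [] => 1
  | i :: σ => t.edgeProb (i :: σ) * pathProb t σ

/-- `σ` is a leaf. -/
def IsLeaf (σ : List ℕ) : Prop := t.hasNode σ ∧ ¬ t.hasNode (0 :: σ)

/-- `P(t↾_k)`: the sum of the probabilities of the branches of the truncation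
of `t` at depth `k` (a branch of `t↾_k` ends either at depth `k` or at a leaf
of `t` of depth `< k`). -/
def truncProb (k : ℕ) : ℝ :=
  ∑' σ : List ℕ,
    if t.hasNode σ ∧ (σ.length = k ∨ (σ.length < k ∧ ¬ t.hasNode (0 :: σ)))
    then t.pathProb σ else 0

/-- `P^k(t)`: the sum of the probabilities of the finite branches of `t` of
length at most `k`. -/
def finBranchProb (k : ℕ) : ℝ :=
  ∑' σ : List ℕ, if t.IsLeaf σ ∧ σ.length ≤ k then t.pathProb σ else 0

/-- `t` is regular: `P^f(t) = lim_k P^k(t) = 1`. -/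
def Regular : Prop := Filter.Tendsto t.finBranchProb Filter.atTop (nhds 1)

/-- `t` is divergent: `P^f(t) = lim_k P^k(t) = 0`. -/
def Divergent : Prop := Filter.Tendsto t.finBranchProb Filter.atTop (nhds 0)

end PTree

/-- `t` is a silent tree of `A`: the root is labeled `A`, the node set is
prefix-closed with children indexed by an initial segment of `ℕ`, the tree is
finitely branching, and every edge labeled `p` from `B` to `B'` satisfies
`p ∈ (0,1]` and `B →^{pτ} B'`. -/
def IsSilentTree (A : Proc Chan) (t : PTree Chan) : Prop :=
  t.node [] = some (A, 1) ∧
  (∀ i σ, t.hasNode (i :: σ) → t.hasNode σ) ∧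
  (∀ i j σ, j ≤ i → t.hasNode (i :: σ) → t.hasNode (j :: σ)) ∧
  (∀ σ, ∃ n, ∀ i, n ≤ i → ¬ t.hasNode (i :: σ)) ∧
  (∀ σ i B p B' p', t.node σ = some (B, p) → t.node (i :: σ) = some (B', p') →
    0 < p' ∧ p' ≤ 1 ∧ Step B.val (.tau p') B'.val)

/-- An ε-tree of `A` with regard to `E`: an `E`-tree of `A` (all node labels lie
in `[A]_E`) such that (1) any edge labeled `q < 1` out of a node `B` comes from a
collective random transition whose targets are exactly the children of `B`, and
(2) an edge labeled `1` out of `B` is a transition `B →^τ B'` to the unique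
child `B'` of `B`. -/
def IsETree (E : Proc Chan → Proc Chan → Prop) (A : Proc Chan) (t : PTree Chan) : Prop :=
  IsSilentTree A t ∧
  (∀ σ B p, t.node σ = some (B, p) → E A B) ∧
  (∀ σ i B p B' q, t.node σ = some (B, p) → t.node (i :: σ) = some (B', q) → q < 1 →
    ∃ n ps Ts, CStep B.val n ps Ts ∧
      (∀ j : ℕ, t.hasNode (j :: σ) ↔ j < n) ∧
      (∀ j : Fin n, ∃ C : Proc Chan, C.val = Ts j ∧ t.node ((j : ℕ) :: σ) = some (C, ps j))) ∧
  (∀ σ i B p B', t.node σ = some (B, p) → t.node (i :: σ) = some (B', 1) →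
    Step B.val (.tau 1) B'.val ∧ i = 0 ∧ ¬ t.hasNode (1 :: σ))

/-- The `E`-class of `A`. -/
def classOf (E : Proc Chan → Proc Chan → Prop) (A : Proc Chan) : Set (Proc Chan) := {B | E A B}

/-- `C` is an equivalence class of `E`. -/
def IsClass (E : Proc Chan → Proc Chan → Prop) (C : Set (Proc Chan)) : Prop :=
  ∃ A, C = classOf E A

/-- An equivalence `E` on `P_RCCS` is codivergent if for every `E`-class either
all members have a divergent ε-tree with regard to `E` or none does. -/
def Codivergent (E : Proc Chan → Proc Chan → Prop) : Prop :=
  ∀ A B, E A B →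
    ((∃ t, IsETree E A t ∧ t.Divergent) ↔ (∃ t, IsETree E B t ∧ t.Divergent))

/-- An ℓ-transition `A ⇝_E →^ℓ C`: a regular ε-tree of `A` with regard to `E`
such that every leaf `L` has a transition `L →^ℓ L'` with `L' ∈ C`. -/
def LTrans (E : Proc Chan → Proc Chan → Prop) (A : Proc Chan) (l : Lab Chan)
    (C : Set (Proc Chan)) : Prop :=
  ∃ t, IsETree E A t ∧ t.Regular ∧
    ∀ σ L p, t.node σ = some (L, p) → ¬ t.hasNode (0 :: σ) →
      ∃ L' ∈ C, Step L.val l L'.val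

/-- The raw term `T` belongs to the set `C` of processes. -/
def inC (C : Set (Proc Chan)) (T : Tm Chan) : Prop := ∃ P ∈ C, P.val = T

/-- `P(L → C)` of a collective silent transition: the sum of the `p_i` whose
target lies in `C`. -/
def collProb (C : Set (Proc Chan)) {n : ℕ} (ps : Fin n → ℝ) (Ts : Fin n → Tm Chan) : ℝ :=
  ∑ i, if inC C (Ts i) then ps i else 0

/-- A `q`-transition `A ⇝_E →^q C`: a regular ε-tree of `A` with regard to `E`
such that every leaf has a collective silent transition whose weighted
probability `P_E(L → C) = P(L → C)/(1 − P(L → [A]_E))` of reaching `C` is `q`. -/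
def QTrans (E : Proc Chan → Proc Chan → Prop) (A : Proc Chan) (q : ℝ)
    (C : Set (Proc Chan)) : Prop :=
  ∃ t, IsETree E A t ∧ t.Regular ∧
    ∀ σ L p, t.node σ = some (L, p) → ¬ t.hasNode (0 :: σ) →
      ∃ (n : ℕ) (ps : Fin n → ℝ) (Ts : Fin n → Tm Chan), CStep L.val n ps Ts ∧
        collProb C ps Ts / (1 - collProb (classOf E A) ps Ts) = q

/-- `E` is a branching bisimulation on `P_RCCS`: an equivalence such that
(1) ℓ-transitions with `ℓ ≠ τ ∨ C ≠ [A]_E` are bisimulated by all members of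
`[A]_E`, and (2) likewise for `q`-transitions with `q ∈ (0,1]` and `C ≠ [A]_E`. -/
def IsBB (E : Proc Chan → Proc Chan → Prop) : Prop :=
  Equivalence E ∧
  (∀ A B l C, l.IsAct → IsClass E C → E A B → (l ≠ Lab.tau 1 ∨ C ≠ classOf E A) →
    LTrans E A l C → LTrans E B l C) ∧
  (∀ A B q C, 0 < q → q ≤ 1 → IsClass E C → E A B → C ≠ classOf E A →
    QTrans E A q C → QTrans E B q C)

/-- `E` is a codivergent branching bisimulation on `P_RCCS`. -/
def IsCBB (E : Proc Chan → Proc Chan → Prop) : Prop := IsBB E ∧ Codivergent E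

/-- `=_RCCS`, the largest codivergent branching bisimulation: the union of all
codivergent branching bisimulations. -/
def RccsEq (A B : Proc Chan) : Prop := ∃ E, IsCBB E ∧ E A B

/-! ### Concrete processes -/

/-- The empty nondeterministic choice `0`. -/
def Tm.nil : Tm Chan := .sum 0 Fin.elim0 Fin.elim0

/-- The prefix `α.T`. -/
def pfx (g : Chan ⊕ Chan) (T : Tm Chan) : Tm Chan := .sum 1 (fun _ => g) (fun _ => T)

/-- The binary choice `α₁.T₁ + α₂.T₂`. -/
def sum2 (g₁ g₂ : Chan ⊕ Chan) (T₁ T₂ : Tm Chan) : Tm Chan := .sum 2 ![g₁, g₂] ![T₁, T₂]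

/-- The binary random choice `pτ.T₁ ⊕ qτ.T₂`. -/
def rand2 (p q : ℝ) (T₁ T₂ : Tm Chan) : Tm Chan := .rand 2 ![p, q] ![T₁, T₂]

/-- `a.0`. -/
def aNil (a : Chan) : Tm Chan := pfx (Sum.inl a) Tm.nil

/-- `c̄.0`. -/
def coNil (c : Chan) : Tm Chan := pfx (Sum.inr c) Tm.nil

/-- `Ω_{½a} = μX.(½τ.a.0 ⊕ ½τ.X)`. -/
def omegaHalfTm (a : Chan) : Tm Chan := .fix (rand2 (1/2) (1/2) (aNil a) (.var 0))

lemma omegaHalf_spec (a : Chan) : (omegaHalfTm a).ClosedAt 0 ∧ (omegaHalfTm a).WF := by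
  refine ⟨?_, ?_⟩ <;>
    simp [omegaHalfTm, rand2, aNil, pfx, Tm.nil, Tm.ClosedAt, Tm.WF, Tm.Guarded,
      Fin.forall_fin_two, Fin.sum_univ_two] <;> norm_num

/-- `Ω_{½a}` as a process. -/
def omegaHalfP (a : Chan) : Proc Chan := ⟨omegaHalfTm a, omegaHalf_spec a⟩

lemma aNil_spec (a : Chan) : (aNil a).ClosedAt 0 ∧ (aNil a).WF := by
  refine ⟨?_, ?_⟩ <;> simp [aNil, pfx, Tm.nil, Tm.ClosedAt, Tm.WF]

/-- `a.0` as a process. -/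
def aNilP (a : Chan) : Proc Chan := ⟨aNil a, aNil_spec a⟩

/-- `a.T' + τ.T`, the abbreviation `(c)(c̄.0 | (a.T' + c.T))` for a fresh `c`. -/
def plusTau (a c : Chan) (T' T : Tm Chan) : Tm Chan :=
  .loc c (.par (coNil c) (sum2 (Sum.inl a) (Sum.inl c) T' T))

/-- `G = μX.(⅓τ.(a.0 + τ.X) ⊕ ⅔τ.X)`. -/
def Gtm (a c : Chan) : Tm Chan :=
  .fix (rand2 (1/3) (2/3) (plusTau a c Tm.nil (.var 0)) (.var 0))

/-- `G_a = a.0 + τ.G`. -/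
def GaTm (a c : Chan) : Tm Chan := plusTau a c Tm.nil (Gtm a c)

lemma Gtm_spec (a c : Chan) : (Gtm a c).ClosedAt 0 ∧ (Gtm a c).WF := by
  refine ⟨?_, ?_⟩ <;>
    simp [Gtm, rand2, plusTau, sum2, coNil, pfx, Tm.nil, Tm.ClosedAt, Tm.WF, Tm.Guarded,
      Fin.forall_fin_two, Fin.sum_univ_two] <;> norm_num

lemma GaTm_spec (a c : Chan) : (GaTm a c).ClosedAt 0 ∧ (GaTm a c).WF := by
  refine ⟨?_, ?_⟩ <;>
    simp [GaTm, Gtm, rand2, plusTau, sum2, coNil, pfx, Tm.nil, Tm.ClosedAt, Tm.WF, Tm.Guarded,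
      Fin.forall_fin_two, Fin.sum_univ_two] <;> norm_num

def GP (a c : Chan) : Proc Chan := ⟨Gtm a c, Gtm_spec a c⟩
def GaP (a c : Chan) : Proc Chan := ⟨GaTm a c, GaTm_spec a c⟩

/-! ### Inversion lemmas -/

lemma step_sum_inv {n : ℕ} {α : Fin n → Chan ⊕ Chan} {T : Fin n → Tm Chan} {l T'}
    (h : Step (.sum n α T) l T') : ∃ i, l = guardLab (α i) ∧ T' = T i := by
  cases h with
  | sum i => exact ⟨i, rfl, rfl⟩

lemma step_rand_inv {n : ℕ} {p : Fin n → ℝ} {T : Fin n → Tm Chan} {l T'}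
    (h : Step (.rand n p T) l T') : ∃ i, l = .tau (p i) ∧ T' = T i := by
  cases h with
  | rand i => exact ⟨i, rfl, rfl⟩

lemma step_fix_inv {T : Tm Chan} {l T'} (h : Step (.fix T) l T') :
    Step (Tm.inst 0 (.fix T) T) l T' := by
  cases h with
  | fix h => exact h

lemma cstep_fix_inv {T : Tm Chan} {n p T'} (h : CStep (.fix T) n p T') :
    CStep (Tm.inst 0 (.fix T) T) n p T' := by
  cases h with
  | fix h => exact h

lemma G_unfold (a c : Chan) :
    Tm.inst 0 (Gtm a c) (rand2 (1/3) (2/3) (plusTau a c Tm.nil (.var 0)) (.var 0))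
      = .rand 2 ![1/3, 2/3] ![GaTm a c, Gtm a c] := by
  have hnil : ∀ S : Tm Chan, Tm.inst 0 S Tm.nil = Tm.nil := by
    intro S
    simp only [Tm.nil, Tm.inst]
    congr 1
    funext i
    exact i.elim0
  simp only [rand2, Tm.inst]
  congr 1
  funext i
  fin_cases i
  · simp only [plusTau, coNil, pfx, sum2, Tm.inst, GaTm, hnil, Fin.zero_eta, Matrix.cons_val_zero]
    congr 2
    congr 1
    funext j
    fin_cases j
    · simp [hnil]
    · simp [Tm.inst]
  · simp [Tm.inst]

lemma G_step (a c : Chan) {l T'} (h : Step (Gtm a c) l T') :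
    (l = .tau (1/3) ∧ T' = GaTm a c) ∨ (l = .tau (2/3) ∧ T' = Gtm a c) := by
  have h1 := step_fix_inv h
  have h2 : Step (.rand 2 ![1/3, 2/3] ![GaTm a c, Gtm a c]) l T' := by
    rw [← G_unfold]; exact h1
  obtain ⟨i, h3, h4⟩ := step_rand_inv h2
  fin_cases i
  · exact Or.inl ⟨h3, h4⟩
  · exact Or.inr ⟨h3, h4⟩

lemma G_step1 (a c : Chan) : Step (Gtm a c) (.tau (1/3)) (GaTm a c) := by
  refine Step.fix ?_
  have := G_unfold a c
  rw [Gtm] at this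
  rw [this]
  exact Step.rand (p := ![1/3, 2/3]) (T := ![GaTm a c, Gtm a c]) 0

lemma G_step2 (a c : Chan) : Step (Gtm a c) (.tau (2/3)) (Gtm a c) := by
  refine Step.fix ?_
  have := G_unfold a c
  rw [Gtm] at this
  rw [this]
  exact Step.rand (p := ![1/3, 2/3]) (T := ![GaTm a c, Gtm a c]) 1

lemma G_cstep1 (a c : Chan) : CStep (Gtm a c) 2 ![1/3, 2/3] ![GaTm a c, Gtm a c] := by
  refine CStep.fix ?_
  have := G_unfold a c
  rw [Gtm] at this
  rw [this]
  exact CStep.rand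

lemma G_cstep (a c : Chan) {n ps Ts} (h : CStep (Gtm a c) n ps Ts) :
    ∀ i, Ts i = GaTm a c ∨ Ts i = Gtm a c := by
  have h1 := cstep_fix_inv h
  have h2 : CStep (.rand 2 ![1/3, 2/3] ![GaTm a c, Gtm a c]) n ps Ts := by
    rw [← G_unfold]; exact h1
  cases h2
  intro i
  fin_cases i <;> simp

lemma coNil_step {c : Chan} {l T'} (h : Step (coNil c) l T') :
    l = .coname c ∧ T' = Tm.nil := by
  obtain ⟨i, h1, h2⟩ := step_sum_inv h
  exact ⟨h1, h2⟩

lemma sum2_step {g1 g2 : Chan ⊕ Chan} {T1 T2 l T'} (h : Step (sum2 g1 g2 T1 T2) l T') :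
    (l = guardLab g1 ∧ T' = T1) ∨ (l = guardLab g2 ∧ T' = T2) := by
  obtain ⟨i, h1, h2⟩ := step_sum_inv h
  fin_cases i
  · left; simpa using ⟨h1, h2⟩
  · right; simpa using ⟨h1, h2⟩

lemma Ga_step_tau (a c : Chan) {p T'} (h : Step (GaTm a c) (.tau p) T') :
    ∃ S, T' = .loc c (.par Tm.nil S) := by
  rw [GaTm, plusTau] at h
  cases h with
  | loc _ h _ _ =>
    cases h with
    | comL h1 h2 => exact absurd (coNil_step h1).1 (by simp)
    | comR h1 h2 => exact ⟨_, by rw [(coNil_step h1).2]⟩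
    | parL h1 => exact absurd (coNil_step h1).1 (by simp)
    | parR h1 => rcases sum2_step h1 with h | h <;> exact absurd h.1 (by simp [guardLab])

lemma Ga_cstep (a c : Chan) {n ps Ts} (h : CStep (GaTm a c) n ps Ts) : False := by
  rw [GaTm, plusTau] at h
  cases h with
  | loc _ h =>
    cases h with
    | parL h1 => cases h1
    | parR h1 => cases h1

lemma loc_nil_ne_G (a c : Chan) (S : Tm Chan) : Tm.loc c (.par Tm.nil S) ≠ Gtm a c := by
  simp [Gtm]

lemma loc_nil_ne_Ga (a c : Chan) (S : Tm Chan) : Tm.loc c (.par Tm.nil S) ≠ GaTm a c := by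
  simp [GaTm, plusTau, coNil, pfx, Tm.nil]

lemma GP_ne_GaP (a c : Chan) : GP a c ≠ GaP a c := by
  intro h
  have := congrArg Subtype.val h
  simp [GP, GaP, Gtm, GaTm, plusTau] at this

/-! ### Generic tree lemmas -/

lemma hasNode_iff {t : PTree Chan} {σ} : t.hasNode σ ↔ ∃ B p, t.node σ = some (B, p) := by
  simp [PTree.hasNode, Option.isSome_iff_exists]

lemma edgeProb_eq {t : PTree Chan} {σ B p} (h : t.node σ = some (B, p)) : t.edgeProb σ = p := by
  simp [PTree.edgeProb, h]

lemma pathProb_pos {A : Proc Chan} {t : PTree Chan} (h : IsSilentTree A t) :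
    ∀ σ, t.hasNode σ → 0 < t.pathProb σ
  | [], _ => by simp [PTree.pathProb]
  | i :: σ, hσ => by
    have h1 := h.2.1 i σ hσ
    have h2 := pathProb_pos h σ h1
    obtain ⟨B, p, hB⟩ := hasNode_iff.1 h1
    obtain ⟨B', p', hB'⟩ := hasNode_iff.1 hσ
    have h3 := (h.2.2.2.2 σ i B p B' p' hB hB').1
    rw [PTree.pathProb, edgeProb_eq hB']
    positivity

lemma finite_level {A : Proc Chan} {t : PTree Chan} (h : IsSilentTree A t) (k : ℕ) :
    {σ | t.hasNode σ ∧ σ.length ≤ k}.Finite := by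
  induction k with
  | zero =>
    refine (Set.finite_singleton []).subset ?_
    rintro σ ⟨_, h2⟩
    simpa using h2
  | succ k ih =>
    choose N hN using h.2.2.2.1
    have : {σ | t.hasNode σ ∧ σ.length ≤ k + 1} ⊆
        {[]} ∪ ⋃ σ ∈ {σ | t.hasNode σ ∧ σ.length ≤ k}, (fun i => i :: σ) '' Set.Iio (N σ) := by
      rintro (_ | ⟨i, σ⟩) ⟨h1, h2⟩
      · simp
      · right
        simp only [Set.mem_iUnion]
        refine ⟨σ, ⟨h.2.1 _ _ h1, by simpa using h2⟩, i, ?_, rfl⟩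
        by_contra hc
        exact hN σ i (by simpa using hc) h1
    refine Set.Finite.subset ?_ this
    exact (Set.finite_singleton _).union (ih.biUnion fun σ _ => (Set.finite_Iio _).image _)

lemma not_divergent_of_leaf {A : Proc Chan} {t : PTree Chan} (h : IsSilentTree A t) {σ}
    (hσ : t.IsLeaf σ) : ¬ t.Divergent := by
  intro hd
  have hpos := pathProb_pos h σ hσ.1
  refine absurd (ge_of_tendsto hd (b := t.pathProb σ) ?_) (not_le.2 hpos)
  filter_upwards [Filter.eventually_ge_atTop σ.length] with k hk
  have hs : Summable fun σ : List ℕ =>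
      if t.IsLeaf σ ∧ σ.length ≤ k then t.pathProb σ else 0 := by
    apply summable_of_hasFiniteSupport
    refine (finite_level h k).subset ?_
    intro ρ hρ
    by_contra hc
    apply hρ
    exact if_neg fun hh => hc ⟨hh.1.1, hh.2⟩
  have := hs.le_tsum σ (fun ρ _ => by
    by_cases hh : t.IsLeaf ρ ∧ ρ.length ≤ k
    · simpa [hh] using (pathProb_pos h ρ hh.1.1).le
    · simp [hh])
  simpa [PTree.finBranchProb, hσ, hk] using this

lemma leaf_of_regular {t : PTree Chan} (h : t.Regular) : ∃ σ, t.IsLeaf σ := by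
  by_contra hc
  push Not at hc
  have : t.finBranchProb = fun _ => 0 := by
    funext k
    simp [PTree.finBranchProb, hc]
  rw [PTree.Regular, this] at h
  exact zero_ne_one (tendsto_nhds_unique tendsto_const_nhds h)

/-- The one-node tree. -/
def triv (A : Proc Chan) : PTree Chan :=
  ⟨fun σ => if σ = [] then some (A, 1) else none⟩

lemma triv_etree {E : Proc Chan → Proc Chan → Prop} (hE : ∀ A, E A A) (A : Proc Chan) :
    IsETree E A (triv A) := by
  refine ⟨⟨?_, ?_, ?_, ?_, ?_⟩, ?_, ?_, ?_⟩
  · simp [triv]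
  · simp [triv, PTree.hasNode]
  · simp [triv, PTree.hasNode]
  · simp [triv, PTree.hasNode]
  · simp [triv]
  · intro σ B p h
    by_cases hs : σ = []
    · simp [triv, hs] at h
      exact h.1 ▸ hE A
    · simp [triv, hs] at h
  · simp [triv]
  · simp [triv]

lemma triv_regular (A : Proc Chan) : (triv A).Regular := by
  have : (triv A).finBranchProb = fun _ => 1 := by
    funext k
    rw [PTree.finBranchProb, tsum_eq_single []]
    · simp [PTree.IsLeaf, triv, PTree.hasNode, PTree.pathProb]
    · intro σ hσ
      simp [PTree.IsLeaf, triv, PTree.hasNode, hσ]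
  rw [PTree.Regular, this]
  exact tendsto_const_nhds

/-! ### The infinite tree of `G` with all leaves `G_a` -/

/-- The node function. -/
def gnode (a c : Chan) : List ℕ → Option (Proc Chan × ℝ)
  | [] => some (GP a c, 1)
  | i :: σ => if ∀ x ∈ σ, x = 1 then
      (if i = 0 then some (GaP a c, 1/3) else if i = 1 then some (GP a c, 2/3) else none)
      else none

/-- The tree. -/
def gtree (a c : Chan) : PTree Chan := ⟨gnode a c⟩

lemma gnode_cons {a c : Chan} {i σ B p} (h : gnode a c (i :: σ) = some (B, p)) :
    (∀ x ∈ σ, x = 1) ∧ ((i = 0 ∧ B = GaP a c ∧ p = 1/3) ∨ (i = 1 ∧ B = GP a c ∧ p = 2/3)) := by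
  rw [gnode] at h
  split_ifs at h with h1 h2 h3
  · simp at h
    exact ⟨h1, Or.inl ⟨h2, h.1.symm, by rw [← h.2]; norm_num⟩⟩
  · simp at h
    exact ⟨h1, Or.inr ⟨h3, h.1.symm, h.2.symm⟩⟩

lemma gnode_ones {a c : Chan} {σ} (h : ∀ x ∈ σ, x = 1) : ∃ p, gnode a c σ = some (GP a c, p) := by
  cases σ with
  | nil => exact ⟨1, rfl⟩
  | cons i σ =>
    simp at h
    refine ⟨2/3, ?_⟩
    rw [gnode, if_pos h.2]
    simp [h.1]

lemma gnode_hasNode_cons {a c : Chan} {i σ} :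
    (gtree a c).hasNode (i :: σ) ↔ (∀ x ∈ σ, x = 1) ∧ i < 2 := by
  constructor
  · intro h
    obtain ⟨B, p, h⟩ := hasNode_iff.1 h
    obtain ⟨h1, h2⟩ := gnode_cons h
    exact ⟨h1, by omega⟩
  · rintro ⟨h1, h2⟩
    have : i = 0 ∨ i = 1 := by omega
    simp only [PTree.hasNode, gtree, gnode, if_pos h1]
    rcases this with rfl | rfl <;> simp

lemma gtree_etree {E : Proc Chan → Proc Chan → Prop} {a c : Chan} (h1 : E (GP a c) (GP a c))
    (h2 : E (GP a c) (GaP a c)) : IsETree E (GP a c) (gtree a c) := by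
  refine ⟨⟨rfl, ?_, ?_, ?_, ?_⟩, ?_, ?_, ?_⟩
  · intro i σ h
    obtain ⟨p, hp⟩ := gnode_ones (a := a) (c := c) (gnode_hasNode_cons.1 h).1
    exact hasNode_iff.2 ⟨_, _, hp⟩
  · intro i j σ hij h
    rw [gnode_hasNode_cons] at *
    exact ⟨h.1, by omega⟩
  · intro σ
    refine ⟨2, fun i hi => ?_⟩
    rw [gnode_hasNode_cons]
    omega
  · intro σ i B p B' p' hB hB'
    obtain ⟨h3, h4⟩ := gnode_cons hB'
    obtain ⟨q, hq⟩ := gnode_ones (a := a) (c := c) h3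
    have : B = GP a c := by
      have := hB.symm.trans hq
      simp at this
      exact this.1
    subst this
    rcases h4 with ⟨_, rfl, rfl⟩ | ⟨_, rfl, rfl⟩
    · exact ⟨by norm_num, by norm_num, G_step1 a c⟩
    · exact ⟨by norm_num, by norm_num, G_step2 a c⟩
  · intro σ B p h
    cases σ with
    | nil =>
      have : B = GP a c := by
        simp [gtree, gnode] at h
        exact h.1.symm
      exact this ▸ h1
    | cons i σ =>
      rcases (gnode_cons h).2 with ⟨_, rfl, _⟩ | ⟨_, rfl, _⟩
      · exact h2
      · exact h1
  · intro σ i B p B' q hB hB' _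
    obtain ⟨h3, h4⟩ := gnode_cons hB'
    obtain ⟨q, hq⟩ := gnode_ones (a := a) (c := c) h3
    have : B = GP a c := by
      have := hB.symm.trans hq
      simp at this
      exact this.1
    subst this
    refine ⟨2, _, _, G_cstep1 a c, ?_, ?_⟩
    · intro j
      rw [gnode_hasNode_cons]
      exact ⟨fun h => h.2, fun h => ⟨h3, h⟩⟩
    · intro j
      fin_cases j
      · exact ⟨GaP a c, rfl, by simp [gtree, gnode, if_pos h3]⟩
      · exact ⟨GP a c, rfl, by simp [gtree, gnode, if_pos h3]⟩
  · intro σ i B p B' hB hB'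
    rcases (gnode_cons hB').2 with ⟨_, _, h⟩ | ⟨_, _, h⟩ <;> norm_num at h

lemma gtree_leaf {a c : Chan} {σ} :
    (gtree a c).IsLeaf σ ↔ ∃ n, σ = 0 :: List.replicate n 1 := by
  constructor
  · rintro ⟨h1, h2⟩
    cases σ with
    | nil => exact absurd (gnode_hasNode_cons.2 ⟨by simp, by norm_num⟩) h2
    | cons i σ =>
      have h3 := gnode_hasNode_cons.1 h1
      have h4 : i ≠ 1 := by
        rintro rfl
        exact h2 (gnode_hasNode_cons.2 ⟨by simpa using h3.1, by norm_num⟩)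
      have h5 : i = 0 := by omega
      subst h5
      exact ⟨σ.length, by rw [← List.eq_replicate_length.2 h3.1]⟩
  · rintro ⟨n, rfl⟩
    refine ⟨gnode_hasNode_cons.2 ⟨by simp, by norm_num⟩, fun h => ?_⟩
    have := (gnode_hasNode_cons.1 h).1 0 (by simp)
    omega

lemma gtree_pathProb_ones (a c : Chan) (n : ℕ) :
    (gtree a c).pathProb (List.replicate n 1) = (2/3) ^ n := by
  induction n with
  | zero => simp [PTree.pathProb]
  | succ n ih =>
    rw [List.replicate_succ, PTree.pathProb, ih, pow_succ']
    congr 1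
    apply edgeProb_eq (B := GP a c)
    simp [gtree, gnode]

lemma gtree_pathProb_leaf (a c : Chan) (n : ℕ) :
    (gtree a c).pathProb (0 :: List.replicate n 1) = 1/3 * (2/3) ^ n := by
  rw [PTree.pathProb, gtree_pathProb_ones]
  congr 1
  apply edgeProb_eq (B := GaP a c)
  simp [gtree, gnode]

lemma gtree_regular (a c : Chan) : (gtree a c).Regular := by
  have : (gtree a c).finBranchProb = fun k => 1 - (2/3 : ℝ) ^ k := by
    funext k
    rw [PTree.finBranchProb,
      tsum_eq_sum (s := (Finset.range k).image fun n => 0 :: List.replicate n 1)]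
    · rw [Finset.sum_image]
      · have : ∀ n ∈ Finset.range k,
            (if (gtree a c).IsLeaf (0 :: List.replicate n 1) ∧
              (0 :: List.replicate n 1).length ≤ k then
              (gtree a c).pathProb (0 :: List.replicate n 1) else 0) = 1/3 * (2/3) ^ n := by
          intro n hn
          rw [if_pos, gtree_pathProb_leaf]
          refine ⟨gtree_leaf.2 ⟨n, rfl⟩, ?_⟩
          simpa using hn
        rw [Finset.sum_congr rfl this, ← Finset.mul_sum, geom_sum_eq (by norm_num)]
        ring
      · intro m _ n _ h
        have := congrArg List.length h
        simpa using this
    · intro σ hσ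
      rw [if_neg]
      rintro ⟨h1, h2⟩
      obtain ⟨n, rfl⟩ := gtree_leaf.1 h1
      apply hσ
      simp at h2 ⊢
      omega
  rw [PTree.Regular, this]
  simpa using (tendsto_pow_atTop_nhds_zero_of_lt_one (r := (2/3 : ℝ))
    (by norm_num) (by norm_num)).const_sub 1

/-! ### The relation -/

/-- The equivalence closure of the pair. -/
abbrev GE (a c : Chan) : Proc Chan → Proc Chan → Prop :=
  Relation.EqvGen fun x y : Proc Chan => x = GP a c ∧ y = GaP a c

lemma GE_inv {a c : Chan} {A B} (h : GE a c A B) :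
    A = B ∨ (A = GP a c ∨ A = GaP a c) ∧ (B = GP a c ∨ B = GaP a c) := by
  induction h with
  | rel x y h => exact Or.inr ⟨Or.inl h.1, Or.inr h.2⟩
  | refl x => exact Or.inl rfl
  | symm x y _ ih =>
    rcases ih with ih | ih
    · exact Or.inl ih.symm
    · exact Or.inr ih.symm
  | trans x y z _ _ ih1 ih2 =>
    rcases ih1 with rfl | ih1
    · exact ih2
    · rcases ih2 with rfl | ih2
      · exact Or.inr ih1
      · exact Or.inr ⟨ih1.1, ih2.2⟩

lemma GE_class {a c : Chan} {A B} (h : GE a c A B) (hA : A = GP a c ∨ A = GaP a c) :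
    B = GP a c ∨ B = GaP a c := by
  rcases GE_inv h with rfl | h
  · exact hA
  · exact h.2

lemma GE_pair (a c : Chan) : GE a c (GP a c) (GaP a c) := .rel _ _ ⟨rfl, rfl⟩

lemma GE_of_mem {a c : Chan} {A B} (hA : A = GP a c ∨ A = GaP a c)
    (hB : B = GP a c ∨ B = GaP a c) : GE a c A B := by
  rcases hA with rfl | rfl <;> rcases hB with rfl | rfl
  · exact .refl _
  · exact GE_pair a c
  · exact (GE_pair a c).symm
  · exact .refl _

/-- In an ε-tree of the class, `G_a` nodes are leaves. -/
lemma Ga_leaf {a c : Chan} {A t} (hA : A = GP a c ∨ A = GaP a c) (ht : IsETree (GE a c) A t)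
    {σ p} (h : t.node σ = some (GaP a c, p)) : t.IsLeaf σ := by
  refine ⟨hasNode_iff.2 ⟨_, _, h⟩, fun hc => ?_⟩
  obtain ⟨B, q, hB⟩ := hasNode_iff.1 hc
  have h1 := (ht.1.2.2.2.2 σ 0 _ _ _ _ h hB).2.2
  obtain ⟨S, hS⟩ := Ga_step_tau a c h1
  rcases GE_class (ht.2.1 _ _ _ hB) hA with rfl | rfl
  · exact loc_nil_ne_G a c S hS.symm
  · exact loc_nil_ne_Ga a c S hS.symm

lemma G_not_div {a c : Chan} {A t} (hA : A = GP a c ∨ A = GaP a c) (ht : IsETree (GE a c) A t) :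
    ¬ t.Divergent := by
  suffices h : ∃ σ, t.IsLeaf σ by
    obtain ⟨σ, hσ⟩ := h
    exact not_divergent_of_leaf ht.1 hσ
  by_contra hc
  push Not at hc
  have hr := ht.1.1
  rcases hA with rfl | rfl
  swap
  · exact hc _ (Ga_leaf (Or.inr rfl) ht hr)
  have h0 : t.hasNode [0] := by
    by_contra h0
    exact hc [] ⟨hasNode_iff.2 ⟨_, _, hr⟩, h0⟩
  obtain ⟨B, q, hB⟩ := hasNode_iff.1 h0
  have hst := ht.1.2.2.2.2 [] 0 _ _ _ _ hr hB
  have hq : q < 1 := by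
    rcases G_step a c hst.2.2 with ⟨h, _⟩ | ⟨h, _⟩
    · simp only [Lab.tau.injEq] at h
      rw [h]; norm_num
    · simp only [Lab.tau.injEq] at h
      rw [h]; norm_num
  obtain ⟨n, ps, Ts, hcs, _, hch⟩ := ht.2.2.1 [] 0 _ _ _ _ hr hB hq
  obtain ⟨i, hi⟩ : ∃ i, Ts i = GaTm a c := by
    have h1 := cstep_fix_inv hcs
    have h2 : CStep (.rand 2 ![1/3, 2/3] ![GaTm a c, Gtm a c]) n ps Ts := by
      rw [← G_unfold]; exact h1
    cases h2
    exact ⟨(0 : Fin 2), rfl⟩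
  obtain ⟨C, hC, hn⟩ := hch i
  have : C = GaP a c := Subtype.ext (hC.trans hi)
  subst this
  exact hc _ (Ga_leaf (Or.inl rfl) ht hn)

/-- The class has an action transition to `C` iff `G_a` has the immediate transition. -/
lemma LTrans_Ga {a c : Chan} {A l C} (hl : l.IsAct) (hA : A = GP a c ∨ A = GaP a c)
    (h : LTrans (GE a c) A l C) : ∃ L' ∈ C, Step (GaTm a c) l L'.val := by
  obtain ⟨t, ht, hreg, hleaf⟩ := h
  obtain ⟨σ, hσ⟩ := leaf_of_regular hreg
  obtain ⟨L, p, hL⟩ := hasNode_iff.1 hσ.1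
  obtain ⟨L', hL', hs⟩ := hleaf _ _ _ hL hσ.2
  rcases GE_class (ht.2.1 _ _ _ hL) hA with rfl | rfl
  · rcases G_step a c hs with ⟨rfl, _⟩ | ⟨rfl, _⟩
    · norm_num [Lab.IsAct] at hl
    · norm_num [Lab.IsAct] at hl
  · exact ⟨L', hL', hs⟩

lemma LTrans_of_Ga {a c : Chan} {A l C} (hA : A = GP a c ∨ A = GaP a c)
    (h : ∃ L' ∈ C, Step (GaTm a c) l L'.val) : LTrans (GE a c) A l C := by
  rcases hA with rfl | rfl
  · refine ⟨gtree a c, gtree_etree (.refl _) (GE_pair a c), gtree_regular a c, ?_⟩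
    intro σ L p hL hn
    obtain ⟨n, rfl⟩ := gtree_leaf.1 ⟨hasNode_iff.2 ⟨_, _, hL⟩, hn⟩
    have : L = GaP a c := by
      rcases (gnode_cons hL).2 with ⟨_, h, _⟩ | ⟨h, _⟩
      · exact h
      · omega
    subst this
    exact h
  · refine ⟨triv _, triv_etree (fun _ => .refl _) _, triv_regular _, ?_⟩
    intro σ L p hL hn
    have : L = GaP a c := by
      by_cases hs : σ = []
      · simp [triv, hs] at hL
        exact hL.1.symm
      · simp [triv, hs] at hL
    subst this
    exact h

lemma no_QTrans {a c : Chan} {A q C} (hq : 0 < q) (hA : A = GP a c ∨ A = GaP a c)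
    (hC : IsClass (GE a c) C) (hne : C ≠ classOf (GE a c) A) (h : QTrans (GE a c) A q C) :
    False := by
  obtain ⟨t, ht, hreg, hleaf⟩ := h
  obtain ⟨σ, hσ⟩ := leaf_of_regular hreg
  obtain ⟨L, p, hL⟩ := hasNode_iff.1 hσ.1
  obtain ⟨n, ps, Ts, hcs, hp⟩ := hleaf _ _ _ hL hσ.2
  rcases GE_class (ht.2.1 _ _ _ hL) hA with rfl | rfl
  swap
  · exact Ga_cstep a c hcs
  have hdis : ∀ P ∈ C, ¬ (P = GP a c ∨ P = GaP a c) := by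
    intro P hP hPG
    obtain ⟨X, rfl⟩ := hC
    apply hne
    have hXP : GE a c X P := hP
    have hXA : GE a c X A := hXP.trans _ _ _ (GE_of_mem hPG hA)
    ext Y
    exact ⟨fun h => (hXA.symm).trans _ _ _ h, fun h => hXA.trans _ _ _ h⟩
  have h0 : collProb C ps Ts = 0 := by
    refine Finset.sum_eq_zero fun i _ => if_neg ?_
    rintro ⟨P, hP, hPT⟩
    refine hdis P hP ?_
    rcases G_cstep a c hcs i with h | h
    · exact Or.inr (Subtype.ext (hPT.trans h))
    · exact Or.inl (Subtype.ext (hPT.trans h))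
  rw [h0, zero_div] at hp
  exact hq.ne hp

lemma GE_isCBB (a c : Chan) : IsCBB (GE a c) := by
  refine ⟨⟨Relation.EqvGen.is_equivalence _, ?_, ?_⟩, ?_⟩
  · intro A B l C hl _ hAB _ h
    rcases GE_inv hAB with rfl | ⟨hA, hB⟩
    · exact h
    · exact LTrans_of_Ga hB (LTrans_Ga hl hA h)
  · intro A B q C hq _ hC hAB hne h
    rcases GE_inv hAB with rfl | ⟨hA, hB⟩
    · exact h
    · exact (no_QTrans hq hA hC hne h).elim
  · intro A B hAB
    rcases GE_inv hAB with rfl | ⟨hA, hB⟩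
    · exact Iff.rfl
    · constructor
      · rintro ⟨t, ht, hd⟩
        exact (G_not_div hA ht hd).elim
      · rintro ⟨t, ht, hd⟩
        exact (G_not_div hB ht hd).elim

/-- For a fresh channel `c ≠ a`, the equivalence closure of
the single pair `{(G, G_a)}`, where `G = μX.(⅓τ.(a.0 + τ.X) ⊕ ⅔τ.X)` and
`G_a = a.0 + τ.G`, is a codivergent branching bisimulation on `P_RCCS`; in
particular `G =_RCCS a.0 + τ.G`. -/
theorem G_eq_Ga {Chan : Type} (a c : Chan) (hfresh : c ≠ a) :
    IsCBB (Relation.EqvGen fun x y : Proc Chan => x = GP a c ∧ y = GaP a c) ∧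
    RccsEq (GP a c) (GaP a c) := by
  exact ⟨GE_isCBB a c, _, GE_isCBB a c, GE_pair a c⟩
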